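/- arXiv:1904.05302 — 3 statements merged into one kernel-verified Lean document; each statement's English description precedes it below -/
import Mathlib

section
/- Let P be a complex polynomial of degree n ≥ 1 all of whose zeros lie in |z| ≤ 1, and define the conjugate-reciprocal polynomial Q(z) = z^n · conj(P(1/conj(z))) (equivalently, Q is the polynomial whose j-th coefficient is the complex conjugate of the (n−j)-th coefficient of P). Then |Q′(z)| ≤ |P′(z)| for every z with |z| = 1. -/
open Polynomial Metric

lemma aux_re (z w : ℂ) (hz : ‖z‖ = 1) (hw : ‖w‖ ≤ 1) (hne : z ≠ w) :
    1 / 2 ≤ (z * (1 / (z - w))).re := by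
  have h0 : z - w ≠ 0 := sub_ne_zero.mpr hne
  have hp : 0 < Complex.normSq (z - w) := Complex.normSq_pos.mpr h0
  have h1 : Complex.normSq z = 1 := by rw [Complex.normSq_eq_norm_sq, hz]; norm_num
  have h2 : Complex.normSq w ≤ 1 := by
    rw [Complex.normSq_eq_norm_sq]; nlinarith [norm_nonneg w]
  have h3 : (z * (1 / (z - w))).re
      = (z.re * (z - w).re + z.im * (z - w).im) / Complex.normSq (z - w) := by
    rw [mul_one_div, Complex.div_re]; ring
  rw [h3, div_le_div_iff₀ (by norm_num) hp]
  simp only [Complex.normSq_apply, Complex.sub_re, Complex.sub_im] at *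
  nlinarith

lemma aux_X_deriv (P : Polynomial ℂ) (z : ℂ) :
    z * (derivative P).eval z
      = ∑ k ∈ Finset.range (P.natDegree + 1), (k : ℂ) * P.coeff k * z ^ k := by
  rw [derivative_eval, sum_over_range _ (by simp), Finset.mul_sum]
  refine Finset.sum_congr rfl fun k _ => ?_
  rcases k with _ | k
  · simp
  · simp only [Nat.add_sub_cancel]; ring

lemma aux_Q (n : ℕ) (P : Polynomial ℂ) (hdeg : P.natDegree = n) (z : ℂ) (hz : ‖z‖ = 1) :
    z ^ n * (starRingEnd ℂ) (z * (derivative (∑ j ∈ Finset.range (n + 1),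
        C ((starRingEnd ℂ) (P.coeff (n - j))) * X ^ j)).eval z)
      = n * P.eval z - z * (derivative P).eval z := by
  have hzz : z * (starRingEnd ℂ) z = 1 := by
    rw [Complex.mul_conj, Complex.normSq_eq_norm_sq, hz]; norm_num
  conv_rhs => rw [aux_X_deriv P, eval_eq_sum_range, hdeg, Finset.mul_sum,
    ← Finset.sum_sub_distrib, ← Finset.sum_flip]
  rw [derivative_sum, eval_finsetSum, Finset.mul_sum, map_sum, Finset.mul_sum]
  refine Finset.sum_congr rfl fun j hj => ?_
  have hjn : j ≤ n := by simpa [Nat.lt_succ_iff] using hj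
  have hpow : z ^ n * (starRingEnd ℂ) z ^ j = z ^ (n - j) := by
    obtain ⟨m, rfl⟩ := Nat.exists_eq_add_of_le hjn
    rw [Nat.add_sub_cancel_left, pow_add, mul_right_comm, ← mul_pow, hzz]; simp
  rw [Nat.cast_sub hjn, ← hpow]
  rcases j with _ | j
  · simp
    ring
  · simp
    ring

theorem stmt_14 (n : ℕ) (hn : 1 ≤ n) (P : Polynomial ℂ) (hdeg : P.natDegree = n)
    (hroots : ∀ w : ℂ, P.IsRoot w → ‖w‖ ≤ 1)
    (Q : Polynomial ℂ)
    (hQ : Q = ∑ j ∈ Finset.range (n + 1),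
        C ((starRingEnd ℂ) (P.coeff (n - j))) * X ^ j) :
    ∀ z : ℂ, ‖z‖ = 1 →
      ‖(Polynomial.derivative Q).eval z‖ ≤
        ‖(Polynomial.derivative P).eval z‖ := by
  intro z hz
  have key := congrArg norm (aux_Q n P hdeg z hz)
  rw [← hQ] at key
  simp only [norm_mul, norm_pow, hz, one_pow, one_mul, RCLike.norm_conj] at key
  rw [key]
  have hP' : ‖(derivative P).eval z‖ = ‖z * (derivative P).eval z‖ := by simp [hz]
  rw [hP']
  by_cases h0 : P.eval z = 0
  · simp [h0]
  have hsp : P.Splits := IsAlgClosed.splits P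
  have hd := hsp.eval_derivative_div_eval_of_ne_zero h0
  set s : ℂ := z * ((derivative P).eval z / P.eval z) with hs
  have hre : (n : ℝ) / 2 ≤ s.re := by
    have h1 : s.re = (P.roots.map fun w => (z * (1 / (z - w))).re).sum := by
      rw [hs, hd, ← Multiset.sum_map_mul_left]
      have := map_multiset_sum Complex.reAddGroupHom (P.roots.map fun w => z * (1 / (z - w)))
      rw [Multiset.map_map] at this
      exact this
    have h2 := Multiset.card_nsmul_le_sum
      (s := P.roots.map fun w => (z * (1 / (z - w))).re) (a := (1 / 2 : ℝ)) (by
        intro x hx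
        obtain ⟨w, hw, rfl⟩ := Multiset.mem_map.mp hx
        have hr := isRoot_of_mem_roots hw
        refine aux_re z w hz (hroots w hr) ?_
        rintro rfl
        exact h0 hr)
    rw [Multiset.card_map, splits_iff_card_roots.mp hsp, hdeg, nsmul_eq_mul] at h2
    rw [h1]; linarith
  have e1 : z * (derivative P).eval z = P.eval z * s := by rw [hs]; field_simp
  have e2 : n * P.eval z - P.eval z * s = P.eval z * (n - s) := by ring
  rw [e1, e2, norm_mul, norm_mul]
  refine mul_le_mul_of_nonneg_left ?_ (norm_nonneg _)
  rw [← sq_le_sq₀ (norm_nonneg _) (norm_nonneg _), ← Complex.normSq_eq_norm_sq,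
    ← Complex.normSq_eq_norm_sq]
  simp only [Complex.normSq_apply, Complex.sub_re, Complex.sub_im, Complex.natCast_re,
    Complex.natCast_im]
  have : (0 : ℝ) ≤ n := Nat.cast_nonneg n
  nlinarith
end

section
/- (Osserman's boundary Schwarz lemma) Let f be a function analytic on an open set containing the closed unit disc {z : |z| ≤ 1}, such that |f(z)| < 1 for all |z| < 1 and f(0) = 0. If b is a point with |b| = 1 and |f(b)| = 1, then |f′(b)| ≥ 2/(1 + |f′(0)|). -/
open Metric

open Filter Topology ComplexConjugate in
theorem osserman_aux_alg (a g : ℂ) (r : ℝ) (hr0 : 0 ≤ r) (hr : r ≤ 1) (ha : ‖a‖ ≤ 1)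
    (hg : ‖g‖ ≤ 1) (h : ‖g - a‖ ≤ r * ‖1 - conj a * g‖) :
    ‖g‖ * (1 + ‖a‖ * r) ≤ r + ‖a‖ := by
  have e1 : ‖g - a‖ ^ 2 = ‖g‖ ^ 2 + ‖a‖ ^ 2 - 2 * (conj a * g).re := by
    simp only [Complex.sq_norm, Complex.normSq_apply]; simp; ring
  have e2 : ‖1 - conj a * g‖ ^ 2 = 1 - 2 * (conj a * g).re + ‖a‖ ^ 2 * ‖g‖ ^ 2 := by
    simp only [Complex.sq_norm, Complex.normSq_apply]; simp; ring
  have e3 : (conj a * g).re ≤ ‖a‖ * ‖g‖ := by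
    refine (Complex.re_le_norm _).trans ?_
    simp
  have h2 : ‖g - a‖ ^ 2 ≤ r ^ 2 * ‖1 - conj a * g‖ ^ 2 := by
    rw [← mul_pow]; gcongr
  rw [e1, e2] at h2
  have hA := norm_nonneg a
  have hG := norm_nonneg g
  have h3 : (1 - r ^ 2) * (conj a * g).re ≤ (1 - r ^ 2) * (‖a‖ * ‖g‖) :=
    mul_le_mul_of_nonneg_left e3 (by nlinarith)
  have hAG : ‖a‖ * ‖g‖ ≤ 1 := by nlinarith
  have h4 : (‖g‖ - ‖a‖) ^ 2 ≤ (r * (1 - ‖a‖ * ‖g‖)) ^ 2 := by nlinarith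
  have h5 := abs_le_of_sq_le_sq' h4 (mul_nonneg hr0 (by linarith))
  linarith [h5.2]

open ComplexConjugate in
theorem osserman_aux_growth (f : ℂ → ℂ) (hf : DifferentiableOn ℂ f (ball 0 1))
    (hbound : ∀ z : ℂ, ‖z‖ < 1 → ‖f z‖ < 1) (hf0 : f 0 = 0) (z : ℂ) (hz : ‖z‖ < 1) :
    ‖f z‖ * (1 + ‖deriv f 0‖ * ‖z‖) ≤ ‖z‖ * (‖z‖ + ‖deriv f 0‖) := by
  have hm : Set.MapsTo f (ball 0 1) (closedBall (f 0) 1) := by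
    intro w hw
    have := hbound w (by simpa using hw)
    simpa [hf0] using this.le
  have hg : ∀ w : ℂ, ‖w‖ < 1 → ‖dslope f 0 w‖ ≤ 1 := fun w hw => by
    simpa using Complex.norm_dslope_le_div_of_mapsTo_ball hf hm (z := w) (by simpa using hw)
  have ha : ‖deriv f 0‖ ≤ 1 := by simpa using hg 0 (by simp)
  have hfz : f z = z * dslope f 0 z := by
    have := sub_smul_dslope f 0 z
    simpa [hf0] using this.symm
  have key : ‖dslope f 0 z‖ * (1 + ‖deriv f 0‖ * ‖z‖) ≤ ‖z‖ + ‖deriv f 0‖ := by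
    rcases ha.eq_or_lt with h1 | h1
    · rw [h1]
      nlinarith [hg z hz, norm_nonneg z]
    · have gd : DifferentiableOn ℂ (dslope f 0) (ball 0 1) :=
        (Complex.differentiableOn_dslope (ball_mem_nhds _ one_pos)).mpr hf
      have hne : ∀ w : ℂ, ‖w‖ < 1 → 1 - conj (deriv f 0) * dslope f 0 w ≠ 0 := by
        intro w hw h0
        have h2 : ‖conj (deriv f 0) * dslope f 0 w‖ = 1 := by
          rw [← sub_eq_zero.mp h0]; simp
        rw [norm_mul, RCLike.norm_conj] at h2
        nlinarith [hg w hw, norm_nonneg (deriv f 0), norm_nonneg (dslope f 0 w)]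
      have hd : DifferentiableOn ℂ (fun w => (dslope f 0 w - deriv f 0) /
          (1 - conj (deriv f 0) * dslope f 0 w)) (ball 0 1) := by
        refine (gd.sub_const _).div ((gd.const_mul _).const_sub _) ?_
        intro w hw
        exact hne w (by simpa using hw)
      have hmm : Set.MapsTo (fun w => (dslope f 0 w - deriv f 0) /
          (1 - conj (deriv f 0) * dslope f 0 w)) (ball 0 1) (closedBall 0 1) := by
        intro w hw
        have hw' : ‖w‖ < 1 := by simpa using hw
        rw [mem_closedBall_zero_iff, norm_div, div_le_one (norm_pos_iff.mpr (hne w hw'))]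
        refine abs_le_of_sq_le_sq' ?_ (norm_nonneg _) |>.2
        have e : ‖1 - conj (deriv f 0) * dslope f 0 w‖ ^ 2 - ‖dslope f 0 w - deriv f 0‖ ^ 2
            = (1 - ‖deriv f 0‖ ^ 2) * (1 - ‖dslope f 0 w‖ ^ 2) := by
          simp only [Complex.sq_norm, Complex.normSq_apply]; simp; ring
        have p1 : 0 ≤ 1 - ‖deriv f 0‖ ^ 2 := by nlinarith [norm_nonneg (deriv f 0)]
        have p2 : 0 ≤ 1 - ‖dslope f 0 w‖ ^ 2 := by nlinarith [norm_nonneg (dslope f 0 w), hg w hw']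
        nlinarith [mul_nonneg p1 p2]
      have hs := Complex.norm_le_norm_of_mapsTo_ball hd hmm (by simp) hz
      rw [norm_div, div_le_iff₀ (norm_pos_iff.mpr (hne z hz))] at hs
      exact osserman_aux_alg _ _ _ (norm_nonneg _) hz.le ha (hg z hz) hs
  rw [hfz, norm_mul, mul_assoc]
  exact mul_le_mul_of_nonneg_left key (norm_nonneg _)

open Filter Topology in
theorem stmt_17 (f : ℂ → ℂ) (U : Set ℂ) (hU : IsOpen U)
    (hball : closedBall (0 : ℂ) 1 ⊆ U) (hf : DifferentiableOn ℂ f U)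
    (hbound : ∀ z : ℂ, ‖z‖ < 1 → ‖f z‖ < 1)
    (hf0 : f 0 = 0)
    (b : ℂ) (hb : ‖b‖ = 1) (hfb : ‖f b‖ = 1) :
    ‖deriv f b‖ ≥ 2 / (1 + ‖deriv f 0‖) := by
  have hfd : HasDerivAt f (deriv f b) b :=
    (hf.differentiableAt (hU.mem_nhds (hball (by simp [hb])))).hasDerivAt
  have hA := norm_nonneg (deriv f 0)
  have h1 : HasDerivAt (fun t : ℝ => f ((t : ℂ) * b)) (deriv f b * b) 1 := by
    have h2 : HasDerivAt (fun w : ℂ => w * b) b ((1 : ℝ) : ℂ) := by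
      simpa using (hasDerivAt_id ((1 : ℝ) : ℂ)).mul_const b
    have h3 : HasDerivAt f (deriv f b) (((1 : ℝ) : ℂ) * b) := by simpa using hfd
    exact (HasDerivAt.comp (h := fun w : ℂ => w * b) ((1 : ℝ) : ℂ) h3 h2).comp_ofReal
  have h4 := (h1.tendsto_slope.mono_left (nhdsLT_le_nhdsNE (1 : ℝ))).norm
  rw [norm_mul, hb, mul_one] at h4
  have h5 : Tendsto (fun t : ℝ => (1 + t) / (1 + ‖deriv f 0‖ * t)) (𝓝[<] 1)
      (𝓝 (2 / (1 + ‖deriv f 0‖))) := by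
    have : ContinuousAt (fun t : ℝ => (1 + t) / (1 + ‖deriv f 0‖ * t)) 1 := by
      refine ContinuousAt.div (by fun_prop) (by fun_prop) ?_
      positivity
    have h6 := this.tendsto.mono_left (nhdsWithin_le_nhds (s := Set.Iio (1 : ℝ)))
    norm_num at h6
    exact h6
  refine le_of_tendsto_of_tendsto h5 h4 ?_
  filter_upwards [Ioo_mem_nhdsLT (zero_lt_one' ℝ)] with t ht
  obtain ⟨ht0, ht1⟩ := ht
  have hn : ‖(t : ℂ) * b‖ = t := by simp [hb, abs_of_pos ht0]
  have hgr := osserman_aux_growth f (hf.mono (ball_subset_closedBall.trans hball)) hbound hf0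
    ((t : ℂ) * b) (by rw [hn]; exact ht1)
  rw [hn] at hgr
  have hpos : 0 < 1 + ‖deriv f 0‖ * t := by positivity
  have htri : 1 - ‖f ((t : ℂ) * b)‖ ≤ ‖f ((t : ℂ) * b) - f b‖ := by
    rw [← hfb, norm_sub_rev]; exact norm_sub_norm_le _ _
  have hsl : ‖slope (fun t : ℝ => f ((t : ℂ) * b)) 1 t‖ = ‖f ((t : ℂ) * b) - f b‖ / (1 - t) := by
    rw [slope_def_module, norm_smul, norm_inv, Real.norm_eq_abs, abs_sub_comm,
      abs_of_pos (by linarith : 0 < 1 - t)]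
    simp [div_eq_inv_mul]
  rw [hsl, div_le_div_iff₀ hpos (by linarith)]
  nlinarith [mul_le_mul_of_nonneg_right htri hpos.le]
end

section
/- Let P(z) = ∑_{j=0}^{n} a_j z^j be a complex polynomial of degree n > 2 all of whose zeros lie in |z| ≤ k with k ≥ 1. Then max_{|z|=k}|P(z)| ≥ (2k^n/(k^n + 1))·max_{|z|=1}|P(z)| + (2k^{n−1}|a_{n−1}|/(k^n + 1))·((k^n − 1)/n − (k^{n−2} − 1)/(n−2)). -/
open Polynomial Metric

/-- The maximum of `|P(z)|` over the circle `|z| = r`. -/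
noncomputable def maxMod (P : Polynomial ℂ) (r : ℝ) : ℝ :=
  ⨆ z : sphere (0 : ℂ) r, ‖P.eval (z : ℂ)‖

lemma align (a b : ℂ) : ∃ e : ℂ, ‖e‖ = 1 ∧ ‖a + e * b‖ = ‖a‖ + ‖b‖ := by
  by_cases ha : a = 0
  · exact ⟨1, by simp, by simp [ha]⟩
  by_cases hb : b = 0
  · exact ⟨1, by simp, by simp [hb]⟩
  have ha' : (‖a‖ : ℂ) ≠ 0 := by simpa using ha
  have hb' : (‖b‖ : ℂ) ≠ 0 := by simpa using hb
  refine ⟨(a / ‖a‖) / (b / ‖b‖), by simp [ha, hb], ?_⟩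
  have : a + (a / ‖a‖) / (b / ‖b‖) * b = (a / ‖a‖) * ((‖a‖ + ‖b‖ : ℝ) : ℂ) := by
    push_cast
    field_simp
  rw [this, norm_mul, Complex.norm_real, Real.norm_of_nonneg (by positivity)]
  simp [ha]

lemma wsum (s : Finset ℂ) (l : ℂ → ℝ) (hl : ∀ z ∈ s, 0 ≤ l z) (g : ℂ → ℂ) (M : ℝ)
    (hg : ∀ z ∈ s, ‖g z‖ ≤ M) : ‖∑ z ∈ s, (l z : ℂ) * g z‖ ≤ (∑ z ∈ s, l z) * M := by
  rw [Finset.sum_mul]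
  refine norm_sum_le_of_le s fun z hz => ?_
  rw [norm_mul, Complex.norm_real, Real.norm_of_nonneg (hl z hz)]
  exact mul_le_mul_of_nonneg_left (hg z hz) (hl z hz)

/-- A monic polynomial with simple roots is the nodal polynomial of its roots. -/
lemma exists_nodes (w : ℂ[X]) (hw : w.Monic)
    (hs : ∀ z, w.eval z = 0 → w.derivative.eval z ≠ 0) :
    ∃ s : Finset ℂ, s.card = w.natDegree ∧ (∀ z ∈ s, w.eval z = 0) ∧
      ∀ (f : ℂ[X]), f.natDegree ≤ w.natDegree → ∀ x : ℂ, w.eval x ≠ 0 →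
        f.eval x = f.coeff w.natDegree * w.eval x +
          ∑ z ∈ s, w.eval x / (w.derivative.eval z * (x - z)) * f.eval z := by
  classical
  have hnd : w.roots.Nodup := by
    rw [Polynomial.nodup_roots_iff_of_splits hw.ne_zero (IsAlgClosed.splits w)]
    rw [Polynomial.separable_def, Polynomial.isCoprime_iff_aeval_ne_zero_of_isAlgClosed ℂ ℂ]
    intro a
    by_cases h : w.eval a = 0
    · right; simpa using hs a h
    · left; simpa using h
  have hcard : w.roots.toFinset.card = w.natDegree := by
    rw [Multiset.toFinset_card_of_nodup hnd, (IsAlgClosed.splits w).natDegree_eq_card_roots]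
  have hnod : Lagrange.nodal w.roots.toFinset id = w := by
    rw [Lagrange.nodal_eq]
    conv_rhs => rw [(IsAlgClosed.splits w).eq_prod_roots_of_monic hw]
    rw [Finset.prod, Multiset.toFinset_val, hnd.dedup]; rfl
  refine ⟨w.roots.toFinset, hcard, fun z hz => ?_, fun f hf x hx => ?_⟩
  · simp at hz; exact hz.2
  set s := w.roots.toFinset with hsdef
  have hroot : ∀ z ∈ s, w.eval z = 0 := fun z hz => by
    simp [hsdef] at hz; exact hz.2
  have hdeg : (f - C (f.coeff w.natDegree) * w).degree < s.card := by
    rw [hcard, Polynomial.degree_lt_iff_coeff_zero]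
    intro m hm
    rcases hm.eq_or_lt with h | h
    · subst h; simp [hw.coeff_natDegree]
    · simp [coeff_eq_zero_of_natDegree_lt h, coeff_eq_zero_of_natDegree_lt (hf.trans_lt h)]
  have key := Lagrange.eq_interpolate_of_eval_eq (s := s) (v := id) (fun z => f.eval z)
    Function.injective_id.injOn hdeg (by intro z hz; simp [hroot z hz])
  have h2 := congrArg (eval x) key
  rw [Lagrange.eval_interpolate_not_at_node _ (by
    intro z hz h; apply hx; rw [h]; exact hroot z hz)] at h2
  rw [hnod] at h2
  have h3 : ∑ z ∈ s, w.eval x / (w.derivative.eval z * (x - z)) * f.eval z = 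
     w.eval x * ∑ i ∈ s, Lagrange.nodalWeight s id i * (x - id i)⁻¹ * f.eval i := by
    rw [Finset.mul_sum]
    refine Finset.sum_congr rfl fun z hz => ?_
    rw [Lagrange.nodalWeight_eq_eval_derivative_nodal hz, hnod]
    simp [div_eq_mul_inv]; ring
  rw [h3, ← h2]; simp

lemma norm_one_conj {z : ℂ} (hz : ‖z‖ = 1) : z * (starRingEnd ℂ) z = 1 := by
  rw [Complex.mul_conj, Complex.normSq_eq_norm_sq, hz]; norm_num

lemma coreA (p : ℕ) (hp : 1 ≤ p) (f : ℂ[X]) (hf : f.natDegree ≤ p + 1) (ρ : ℝ) (h0 : 0 < ρ)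
    (h1 : ρ < 1) (M : ℝ) (hM : ∀ z : ℂ, ‖z‖ = 1 → ‖f.eval z‖ ≤ M) (e : ℂ) (he : ‖e‖ = 1) :
    ‖f.eval (ρ : ℂ) + e * ((1 - (ρ : ℂ) ^ 2) * f.coeff (p + 1))‖ ≤ M := by
  set w : ℂ[X] := X ^ p * (X - C (ρ : ℂ)) - C e * (1 - C (ρ : ℂ) * X) with hw
  have hlt : (C e * (1 - C (ρ : ℂ) * X) : ℂ[X]).degree < (X ^ p * (X - C (ρ : ℂ)) : ℂ[X]).degree := by
    have h2 : (X ^ p * (X - C (ρ : ℂ)) : ℂ[X]).degree = ((p + 1 : ℕ) : WithBot ℕ) := by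
      rw [degree_mul, degree_X_pow, degree_X_sub_C]; norm_num
    have h3 : (C e * (1 - C (ρ : ℂ) * X) : ℂ[X]).degree ≤ ((1 : ℕ) : WithBot ℕ) := by
      compute_degree
      simp
    rw [h2]
    refine h3.trans_lt ?_
    exact_mod_cast Nat.lt_succ_of_le hp
  have hmon : w.Monic := by
    refine Monic.sub_of_left ?_ hlt
    exact (monic_X_pow p).mul (monic_X_sub_C _)
  have hnd : w.natDegree = p + 1 := by
    have h2 : (X ^ p * (X - C (ρ : ℂ)) : ℂ[X]).degree = ((p + 1 : ℕ) : WithBot ℕ) := by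
      rw [degree_mul, degree_X_pow, degree_X_sub_C]; norm_num
    exact natDegree_eq_of_degree_eq_some ((degree_sub_eq_left_of_degree_lt hlt).trans h2)
  have hev : ∀ z, w.eval z = z ^ p * (z - ρ) - e * (1 - ρ * z) := by intro z; simp [hw]
  have hsq : ∀ z : ℂ, ‖1 - ρ * z‖ ^ 2 - ‖z - ρ‖ ^ 2 = (1 - ρ ^ 2) * (1 - ‖z‖ ^ 2) := by
    intro z
    simp only [← Complex.normSq_eq_norm_sq, Complex.normSq_apply]
    simp; ring
  have hρ2 : 0 < 1 - ρ ^ 2 := by nlinarith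
  -- roots lie on the unit circle
  have hcirc : ∀ z, w.eval z = 0 → ‖z‖ = 1 := by
    intro z hz
    rw [hev, sub_eq_zero] at hz
    have hn := congrArg norm hz
    rw [norm_mul, norm_mul, norm_pow, he, one_mul] at hn
    have hs := hsq z
    rcases lt_trichotomy ‖z‖ 1 with h | h | h
    · exfalso
      have h4 : ‖z‖ ^ p * ‖z - ρ‖ ≤ ‖z - ρ‖ :=
        mul_le_of_le_one_left (norm_nonneg _) (pow_le_one₀ (norm_nonneg _) h.le)
      have h5 : 0 < (1 - ρ ^ 2) * (1 - ‖z‖ ^ 2) := mul_pos hρ2 (by nlinarith [norm_nonneg z])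
      nlinarith [norm_nonneg (1 - ρ * z), norm_nonneg (z - ρ)]
    · exact h
    · exfalso
      have h4 : ‖z - ρ‖ ≤ ‖z‖ ^ p * ‖z - ρ‖ :=
        le_mul_of_one_le_left (norm_nonneg _) (one_le_pow₀ h.le)
      have h5 : 0 < (1 - ρ ^ 2) * (‖z‖ ^ 2 - 1) := mul_pos hρ2 (by nlinarith [norm_nonneg z])
      nlinarith [norm_nonneg (1 - ρ * z), norm_nonneg (z - ρ)]
  have hder : ∀ z, w.eval z = 0 → w.derivative.eval z * (z - ρ) =
      e * ((p * ‖1 - ρ * z‖ ^ 2 + (1 - ρ ^ 2) : ℝ) : ℂ) := by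
    intro z hz
    have hz1 := hcirc z hz
    have hc := norm_one_conj hz1
    rw [hev] at hz
    have hz0 : z ≠ 0 := by rintro rfl; simp at hz1
    have hd : w.derivative.eval z = p * z ^ (p - 1) * (z - ρ) + z ^ p + e * ρ := by
      simp [hw, derivative_X_pow]
    have hpp : z ^ p = z * z ^ (p - 1) := by rw [← pow_succ', Nat.sub_add_cancel hp]
    have hnn : ((‖1 - ρ * z‖ ^ 2 : ℝ) : ℂ) = (1 - ρ * z) * (1 - ρ * (starRingEnd ℂ) z) := by
      rw [← Complex.normSq_eq_norm_sq, ← Complex.mul_conj]; simp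
    rw [hd]
    push_cast
    push_cast at hnn
    rw [hnn]
    apply mul_left_cancel₀ hz0
    rw [hpp] at hz ⊢
    linear_combination (p * (z - ρ) + z) * hz + e * p * (1 - ρ * z) * ρ * hc
  have hpos : ∀ z : ℂ, 0 < p * ‖1 - ρ * z‖ ^ 2 + (1 - ρ ^ 2) := fun z => by positivity
  have he0 : e ≠ 0 := by rintro rfl; simp at he
  obtain ⟨s, hs, hsr, hint⟩ := exists_nodes w hmon (by
    intro z hz h
    have := hder z hz
    rw [h, zero_mul] at this
    have h6 := (hpos z).ne'
    rcases mul_eq_zero.1 this.symm with h7 | h7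
    · exact he0 h7
    · exact h6 (by exact_mod_cast h7))
  rw [hnd] at hint
  have hwρ : w.eval (ρ : ℂ) = - (e * (1 - (ρ : ℂ) ^ 2)) := by rw [hev]; ring
  have hρ2' : (1 - (ρ : ℂ) ^ 2) ≠ 0 := by exact_mod_cast hρ2.ne'
  have hwρ0 : w.eval (ρ : ℂ) ≠ 0 := by
    rw [hwρ]; exact neg_ne_zero.2 (mul_ne_zero he0 hρ2')
  set l : ℂ → ℝ := fun z => (1 - ρ ^ 2) / (p * ‖1 - ρ * z‖ ^ 2 + (1 - ρ ^ 2)) with hl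
  have hform : ∀ g : ℂ[X], g.natDegree ≤ p + 1 →
      g.eval (ρ : ℂ) + e * ((1 - (ρ : ℂ) ^ 2) * g.coeff (p + 1)) = ∑ z ∈ s, (l z : ℂ) * g.eval z := by
    intro g hg
    rw [hint g hg ρ hwρ0, hwρ]
    have : ∀ z ∈ s, -(e * (1 - (ρ : ℂ) ^ 2)) / (w.derivative.eval z * (ρ - z)) * g.eval z
        = (l z : ℂ) * g.eval z := by
      intro z hz
      congr 1
      have h8 := hder z (hsr z hz)
      have h9 : w.derivative.eval z * (ρ - z) =
        - (e * ((p * ‖1 - ρ * z‖ ^ 2 + (1 - ρ ^ 2) : ℝ) : ℂ)) := by rw [← h8]; ring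
      rw [h9, neg_div_neg_eq, mul_div_mul_left _ _ he0, hl]
      push_cast; rfl
    rw [Finset.sum_congr rfl this]; ring
  have hsum : ∑ z ∈ s, l z = 1 := by
    have := hform 1 (by simp)
    have hc : (1 : ℂ[X]).coeff (p + 1) = 0 := by simp [coeff_one]
    rw [hc] at this
    simp only [eval_one, mul_zero, add_zero, mul_one] at this
    exact_mod_cast this.symm
  rw [hform f hf]
  refine (wsum s l (fun z _ => (div_pos hρ2 (hpos z)).le) _ M
    (fun z hz => hM z (hcirc z (hsr z hz)))).trans ?_
  rw [hsum, one_mul]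

lemma coreB (n : ℕ) (hn : 1 ≤ n) (f : ℂ[X]) (hf : f.natDegree ≤ n) (M : ℝ)
    (hM : ∀ z : ℂ, ‖z‖ = 1 → ‖f.eval z‖ ≤ M) (e : ℂ) (he : ‖e‖ = 1) :
    ‖n * f.eval 1 - f.derivative.eval 1 + e * f.derivative.eval 1‖ ≤ n * M := by
  by_cases he1 : e = 1
  · subst he1
    have := hM 1 (by simp)
    rw [one_mul, sub_add_cancel, norm_mul, Complex.norm_natCast]
    gcongr
  have he0 : e ≠ 0 := by rintro rfl; simp at he
  have hn0 : (n : ℂ) ≠ 0 := by exact_mod_cast (by omega : n ≠ 0)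
  set w : ℂ[X] := X ^ n - C e with hw
  have hmon : w.Monic := monic_X_pow_sub_C e (by omega)
  have hnd : w.natDegree = n := natDegree_X_pow_sub_C
  have hev : ∀ z, w.eval z = z ^ n - e := by intro z; simp [hw]
  have hcirc : ∀ z, w.eval z = 0 → ‖z‖ = 1 := by
    intro z hz
    rw [hev, sub_eq_zero] at hz
    have hn := congrArg norm hz
    rw [norm_pow, he] at hn
    exact (pow_eq_one_iff_of_nonneg (norm_nonneg z) (by omega)).1 hn
  have hder : ∀ z, w.eval z = 0 → w.derivative.eval z * z = n * e := by
    intro z hz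
    rw [hev, sub_eq_zero] at hz
    have hpp : z ^ n = z ^ (n - 1) * z := by rw [← pow_succ, Nat.sub_add_cancel hn]
    simp only [hw, derivative_sub, derivative_X_pow, derivative_C, sub_zero, eval_mul, eval_pow,
      eval_X, map_natCast, eval_natCast]
    rw [mul_assoc, ← hpp, hz]
  obtain ⟨s, hs, hsr, hint⟩ := exists_nodes w hmon (by
    intro z hz h
    have := hder z hz
    rw [h, zero_mul] at this
    exact mul_ne_zero hn0 he0 this.symm)
  rw [hnd] at hint
  have h1e : (1 - e) ≠ 0 := sub_ne_zero.2 (Ne.symm he1)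
  have hw1 : w.eval 1 = 1 - e := by rw [hev]; simp
  set l : ℂ → ℝ := fun z => ‖1 - e‖ ^ 2 / (n * ‖1 - z‖ ^ 2) with hl
  have hsqn : ∀ z : ℂ, ‖z‖ = 1 → (1 - z) ^ 2 = - z * (((‖1 - z‖ : ℝ) : ℂ) ^ 2) := by
    intro z hz
    have hc := norm_one_conj hz
    have hnn : ((‖1 - z‖ ^ 2 : ℝ) : ℂ) = (1 - z) * (1 - (starRingEnd ℂ) z) := by
      rw [← Complex.normSq_eq_norm_sq, ← Complex.mul_conj]; simp
    push_cast at hnn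
    rw [hnn]
    linear_combination (z-1) * hc
  have hform : ∀ g : ℂ[X], g.natDegree ≤ n →
      (1 - e) * g.derivative.eval 1 = ∑ z ∈ s, (l z : ℂ) * (g.eval 1 - g.eval z) := by
    intro g hg
    obtain ⟨q, hq⟩ : (X - C 1) ∣ g - C (g.eval 1) := by
      rw [dvd_iff_isRoot]; simp
    have hg' : g = C (g.eval 1) + (X - C 1) * q := by rw [← hq]; ring
    have hd : g.derivative.eval 1 = q.eval 1 := by
      rw [hg']; simp
    have hge : ∀ z, g.eval z - g.eval 1 = (z - 1) * q.eval z := by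
      intro z
      have := congrArg (eval z) hq
      simpa using this
    have hqd : q.natDegree < n := by
      by_cases hq0 : q = 0
      · rw [hq0]; simp; omega
      have h2 := congrArg natDegree hq
      rw [natDegree_sub_C, natDegree_mul (X_sub_C_ne_zero 1) hq0, natDegree_X_sub_C] at h2
      omega
    rw [hd, hint q hqd.le 1 (by rw [hw1]; exact h1e), coeff_eq_zero_of_natDegree_lt hqd, hw1,
      zero_mul, zero_add, Finset.mul_sum]
    refine Finset.sum_congr rfl fun z hz => ?_
    have hz0 := hsr z hz
    have hz1 := hcirc z hz0
    have hzne : z ≠ 0 := by rintro rfl; simp at hz1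
    have hz1' : 1 - z ≠ 0 := by
      intro h
      have : z = 1 := (sub_eq_zero.1 h).symm
      rw [this, hw1] at hz0
      exact h1e hz0
    have hd3 := hder z hz0
    have hd4 : w.derivative.eval z = n * e / z := by rw [← hd3]; field_simp
    have e1 := hsqn z hz1
    have e2 := hsqn e he
    have h5 : g.eval 1 - g.eval z = (1 - z) * q.eval z := by linear_combination - hge z
    have hnz : (((‖1 - z‖ : ℝ) : ℂ)) ≠ 0 := by simpa using hz1'
    rw [h5, hd4, hl]
    push_cast
    have hB : (((‖1 - z‖ : ℝ) : ℂ)) ^ 2 ≠ 0 := pow_ne_zero 2 hnz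
    generalize (((‖1 - z‖ : ℝ) : ℂ)) ^ 2 = B at *
    generalize (((‖1 - e‖ : ℝ) : ℂ)) ^ 2 = A at *
    rw [show (n : ℂ) * e / z * (1 - z) = (n * e * (1 - z)) / z by ring]
    have h6 : (1 - e) * ((1 - e) / ((n * e * (1 - z)) / z) * q.eval z)
        = ((1 - e) ^ 2 * z * q.eval z) / (n * e * (1 - z)) := by
      field_simp
    have h7 : A / (n * B) * ((1 - z) * q.eval z) = (A * (1 - z) * q.eval z) / (n * B) := by ring
    rw [h6, h7, div_eq_div_iff (mul_ne_zero (mul_ne_zero hn0 he0) hz1') (mul_ne_zero hn0 hB)]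
    linear_combination (z * q.eval z * n * B) * e2 - (A * q.eval z * n * e) * e1
  have hsum : ∑ z ∈ s, l z = n := by
    have := hform (X ^ n) (by simp)
    have h2 : ∑ z ∈ s, (l z : ℂ) * ((X ^ n : ℂ[X]).eval 1 - (X ^ n : ℂ[X]).eval z)
        = (∑ z ∈ s, (l z : ℂ)) * (1 - e) := by
      rw [Finset.sum_mul]
      refine Finset.sum_congr rfl fun z hz => ?_
      have := hsr z hz
      rw [hev, sub_eq_zero] at this
      simp [this]
    rw [h2, mul_comm] at this
    have h3 := mul_right_cancel₀ h1e this
    simp [derivative_X_pow] at h3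
    exact_mod_cast h3.symm
  have hfin : n * f.eval 1 - f.derivative.eval 1 + e * f.derivative.eval 1
      = ∑ z ∈ s, (l z : ℂ) * f.eval z := by
    have h1 := hform f hf
    simp only [mul_sub, Finset.sum_sub_distrib] at h1
    rw [← Finset.sum_mul] at h1
    have h2 : ∑ z ∈ s, (l z : ℂ) = n := by exact_mod_cast hsum
    rw [h2] at h1
    linear_combination - h1
  rw [hfin]
  refine (wsum s l (fun z _ => by positivity) _ M
    (fun z hz => hM z (hcirc z (hsr z hz)))).trans ?_
  rw [hsum]

lemma bern (n : ℕ) (hn : 1 ≤ n) (f : ℂ[X]) (hf : f.natDegree ≤ n) (M : ℝ)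
    (hM : ∀ z : ℂ, ‖z‖ = 1 → ‖f.eval z‖ ≤ M) (u : ℂ) (hu : ‖u‖ = 1) :
    ‖n * f.eval u - u * f.derivative.eval u‖ + ‖f.derivative.eval u‖ ≤ n * M := by
  set g : ℂ[X] := f.comp (C u * X) with hg
  have hgd : g.natDegree ≤ n := by
    rw [natDegree_le_iff_coeff_eq_zero]
    intro N hN
    rw [hg, comp_C_mul_X_coeff, coeff_eq_zero_of_natDegree_lt (hf.trans_lt hN), zero_mul]
  have hg1 : g.eval 1 = f.eval u := by simp [hg]
  have hg2 : g.derivative.eval 1 = u * f.derivative.eval u := by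
    simp [hg, derivative_comp]
  obtain ⟨e, he, h⟩ := align (n * f.eval u - u * f.derivative.eval u) (u * f.derivative.eval u)
  have := coreB n hn g hgd M (by
    intro z hz
    rw [hg, eval_comp]
    apply hM
    simp [hu, hz]) e he
  rw [hg1, hg2, h, norm_mul u, hu, one_mul] at this
  exact this

lemma erdosLax (n : ℕ) (hn : 1 ≤ n) (f : ℂ[X]) (hf : f.natDegree ≤ n) (M : ℝ)
    (hM : ∀ z : ℂ, ‖z‖ = 1 → ‖f.eval z‖ ≤ M) (hr : ∀ z, f.eval z = 0 → 1 ≤ ‖z‖)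
    (u : ℂ) (hu : ‖u‖ = 1) : ‖f.derivative.eval u‖ ≤ n * M / 2 := by
  have hb := bern n hn f hf M hM u hu
  suffices ‖f.derivative.eval u‖ ≤ ‖n * f.eval u - u * f.derivative.eval u‖ by linarith
  by_cases h0 : f.eval u = 0
  · simp [h0, hu]
  have hlog := (IsAlgClosed.splits f).eval_derivative_div_eval_of_ne_zero h0
  set t : ℂ := u * (f.derivative.eval u / f.eval u) with ht
  have hre : t.re ≤ n / 2 := by
    have h1 : t = (f.roots.map fun z ↦ u * (1 / (u - z))).sum := by
      rw [ht, hlog, Multiset.sum_map_mul_left]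
    have h2 : t.re = (f.roots.map fun z ↦ (u * (1 / (u - z))).re).sum := by
      rw [h1]
      have := map_multiset_sum Complex.reAddGroupHom (f.roots.map fun z ↦ u * (1 / (u - z)))
      simpa [Multiset.map_map] using this
    rw [h2]
    have h3 : (f.roots.map fun z ↦ (u * (1 / (u - z))).re).sum ≤ f.roots.card • (1 / 2 : ℝ) := by
      refine (Multiset.sum_le_card_nsmul _ (1 / 2 : ℝ) ?_).trans (by simp)
      intro x hx
      obtain ⟨z, hz, rfl⟩ := Multiset.mem_map.1 hx
      have hz0 : f.eval z = 0 := (mem_roots'.1 hz).2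
      have hz1 := hr z hz0
      have hne : u - z ≠ 0 := by
        intro h; rw [sub_eq_zero.1 h] at h0; exact h0 hz0
      have hpos : 0 < Complex.normSq (u - z) := Complex.normSq_pos.2 hne
      have hu2 : Complex.normSq u = 1 := by rw [Complex.normSq_eq_norm_sq, hu]; norm_num
      have hz2 : 1 ≤ Complex.normSq z := by
        rw [Complex.normSq_eq_norm_sq]; nlinarith
      rw [mul_one_div, Complex.div_re, ← add_div, div_le_iff₀ hpos]
      simp only [Complex.normSq_apply, Complex.sub_re, Complex.sub_im] at *
      nlinarith
    have h4 : (f.roots.card : ℝ) ≤ n := by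
      exact_mod_cast (card_roots' f).trans hf
    rw [nsmul_eq_mul] at h3
    linarith
  have e1 : f.derivative.eval u * u = t * f.eval u := by rw [ht]; field_simp
  have e2 : n * f.eval u - u * f.derivative.eval u = (n - t) * f.eval u := by
    rw [mul_comm u, e1]; ring
  have e3 : ‖f.derivative.eval u‖ = ‖t‖ * ‖f.eval u‖ := by
    rw [← norm_mul, ← e1, norm_mul, hu, mul_one]
  rw [e2, e3, norm_mul ((n : ℂ) - t)]
  refine mul_le_mul_of_nonneg_right ?_ (norm_nonneg (f.eval u))
  refine (sq_le_sq₀ (norm_nonneg t) (norm_nonneg ((n : ℂ) - t))).1 ?_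
  rw [← Complex.normSq_eq_norm_sq, ← Complex.normSq_eq_norm_sq, Complex.normSq_apply,
    Complex.normSq_apply]
  simp
  have : (0 : ℝ) ≤ n := by positivity
  nlinarith

lemma eval_reflect (m : ℕ) (Q : ℂ[X]) (hQ : Q.natDegree ≤ m) (z : ℂ) (hz : z ≠ 0) :
    (Q.reflect m).eval z = z ^ m * Q.eval z⁻¹ := by
  let _ := invertibleOfNonzero (inv_ne_zero hz)
  have := eval₂_reflect_mul_pow (RingHom.id ℂ) z⁻¹ m Q hQ
  rw [invOf_eq_inv, inv_inv] at this
  change (Q.reflect m).eval z * _ = Q.eval z⁻¹ at this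
  rw [← this, mul_comm, mul_assoc, ← mul_pow, inv_mul_cancel₀ hz, one_pow, mul_one]

lemma frr (m : ℕ) (hm : 2 ≤ m) (Q : ℂ[X]) (hQ : Q.natDegree ≤ m) (M : ℝ)
    (hM : ∀ z : ℂ, ‖z‖ = 1 → ‖Q.eval z‖ ≤ M) (r : ℝ) (hr : 1 ≤ r) (u : ℂ) (hu : ‖u‖ = 1) :
    ‖Q.eval (r * u)‖ ≤ r ^ m * M - (r ^ m - r ^ (m - 2)) * ‖Q.coeff 0‖ := by
  rcases hr.eq_or_lt with h | h
  · rw [← h]; simpa using hM u hu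
  have hr0 : 0 < r := by linarith
  obtain ⟨p, rfl⟩ : ∃ p, m = p + 1 := ⟨m - 1, by omega⟩
  set g : ℂ[X] := Q.comp (C u * X) with hg
  have hgd : g.natDegree ≤ p + 1 := by
    rw [natDegree_le_iff_coeff_eq_zero]
    intro N hN
    rw [hg, comp_C_mul_X_coeff, coeff_eq_zero_of_natDegree_lt (hQ.trans_lt hN), zero_mul]
  set f := g.reflect (p + 1) with hf
  have hfd : f.natDegree ≤ p + 1 := natDegree_reflect_le.trans (by simp [hgd])
  have hfc : f.coeff (p + 1) = Q.coeff 0 := by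
    rw [hf, coeff_reflect, revAt_le le_rfl, Nat.sub_self, hg, comp_C_mul_X_coeff]; simp
  have hfe : ∀ z ≠ 0, f.eval z = z ^ (p + 1) * Q.eval (u * z⁻¹) := by
    intro z hz
    rw [hf, eval_reflect _ _ hgd z hz, hg, eval_comp]; simp
  obtain ⟨e, he, hal⟩ := align (f.eval ((r⁻¹ : ℝ) : ℂ)) ((1 - ((r⁻¹ : ℝ) : ℂ) ^ 2) * f.coeff (p + 1))
  have key := coreA p (by omega) f hfd r⁻¹ (by positivity) (inv_lt_one_of_one_lt₀ h) M (by
    intro z hz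
    have hz0 : z ≠ 0 := by rintro rfl; simp at hz
    rw [hfe z hz0, norm_mul, norm_pow, hz, one_pow, one_mul]
    apply hM
    simp [hu, hz]) e he
  have hi : 0 ≤ 1 - r⁻¹ ^ 2 := by
    have : r⁻¹ ≤ 1 := inv_le_one_of_one_le₀ hr
    have : 0 < r⁻¹ := by positivity
    nlinarith
  have hr0' : (r : ℂ) ≠ 0 := by exact_mod_cast hr0.ne'
  rw [hal, hfe _ (by simpa using hr0.ne'), hfc, norm_mul, norm_mul, norm_pow, Complex.norm_real,
    Real.norm_of_nonneg (by positivity)] at key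
  have e1 : ‖(1 - ((r⁻¹ : ℝ) : ℂ) ^ 2)‖ = 1 - r⁻¹ ^ 2 := by
    rw [← Real.norm_of_nonneg hi, ← Complex.norm_real]; push_cast; rfl
  rw [e1] at key
  have e2 : u * (((r⁻¹ : ℝ) : ℂ))⁻¹ = r * u := by push_cast; rw [inv_inv, mul_comm]
  rw [e2] at key
  have k2 := mul_le_mul_of_nonneg_left key (by positivity : 0 ≤ r ^ (p + 1))
  have e3 : r ^ (p + 1) * r⁻¹ ^ (p + 1) = 1 := by rw [← mul_pow, mul_inv_cancel₀ hr0.ne', one_pow]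
  have e4 : r ^ (p + 1) * r⁻¹ ^ 2 = r ^ (p + 1 - 2) := by
    obtain ⟨q, rfl⟩ : ∃ q, p = q + 1 := ⟨p - 1, by omega⟩
    rw [show q + 1 + 1 - 2 = q by omega]
    field_simp
    ring
  rw [← e4]
  have e5 : ‖Q.eval (r * u)‖ = r ^ (p + 1) * r⁻¹ ^ (p + 1) * ‖Q.eval (r * u)‖ := by rw [e3, one_mul]
  rw [e5]
  linarith

lemma growth (n : ℕ) (hn : 2 < n) (H : ℂ[X]) (hH : H.natDegree ≤ n) (M : ℝ)
    (hM : ∀ z : ℂ, ‖z‖ = 1 → ‖H.eval z‖ ≤ M) (hr : ∀ z, H.eval z = 0 → 1 ≤ ‖z‖)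
    (R : ℝ) (hR : 1 ≤ R) (u : ℂ) (hu : ‖u‖ = 1) :
    ‖H.eval (R * u)‖ ≤ (R ^ n + 1) / 2 * M - ‖H.coeff 1‖ *
      ((R ^ n - 1) / (n : ℝ) - (R ^ (n - 2) - 1) / ((n : ℝ) - 2)) := by
  have hn2 : ((n : ℝ) - 2) ≠ 0 := by
    have : (2 : ℝ) < n := by exact_mod_cast hn
    linarith
  have hn0 : (n : ℝ) ≠ 0 := by positivity
  have hd : H.derivative.natDegree ≤ n - 1 := (natDegree_derivative_le H).trans (by omega)
  have hc : H.derivative.coeff 0 = H.coeff 1 := by simp [coeff_derivative]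
  have bound : ∀ x ∈ Set.Ico (1 : ℝ) R, ‖H.derivative.eval (x * u) * u‖ ≤
      n * x ^ (n - 1) / 2 * M - ‖H.coeff 1‖ * (x ^ (n - 1) - x ^ (n - 3)) := by
    intro x hx
    have := frr (n - 1) (by omega) H.derivative hd (n * M / 2)
      (fun z hz => erdosLax n (by omega) H hH M hM hr z hz) x hx.1 u hu
    rw [hc, show n - 1 - 2 = n - 3 by omega] at this
    rw [norm_mul, hu, mul_one]
    linarith
  refine image_norm_le_of_norm_deriv_right_le_deriv_boundary
    (f := fun x : ℝ => H.eval (x * u)) (f' := fun x : ℝ => H.derivative.eval (x * u) * u)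
    (a := 1) (b := R)
    (B := fun x => (x ^ n + 1) / 2 * M - ‖H.coeff 1‖ *
      ((x ^ n - 1) / (n : ℝ) - (x ^ (n - 2) - 1) / ((n : ℝ) - 2)))
    (B' := fun x => n * x ^ (n - 1) / 2 * M - ‖H.coeff 1‖ * (x ^ (n - 1) - x ^ (n - 3)))
    ?_ ?_ ?_ ?_ bound ⟨hR, le_rfl⟩
  · fun_prop
  · intro x _
    have h1 : HasDerivAt (fun x : ℝ => (x : ℂ) * u) u x := by
      simpa using (Complex.ofRealCLM.hasDerivAt (x := x)).mul_const u
    have := (H.hasDerivAt ((x : ℂ) * u)).comp x h1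
    exact this.hasDerivWithinAt
  · simpa using hM u hu
  · intro x
    have h1 := hasDerivAt_pow n x
    have h2 := hasDerivAt_pow (n - 2) x
    have h3 := (((h1.add_const 1).div_const 2).mul_const M).sub
      ((((h1.sub_const 1).div_const (n : ℝ)).sub ((h2.sub_const 1).div_const ((n : ℝ) - 2))).const_mul
        ‖H.coeff 1‖)
    refine h3.congr_deriv ?_
    rw [Nat.cast_sub hn.le, show n - 2 - 1 = n - 3 by omega]
    push_cast
    field_simp

theorem stmt_19 (n : ℕ) (hn : 2 < n) (P : Polynomial ℂ) (hdeg : P.natDegree = n)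
    (k : ℝ) (hk : 1 ≤ k) (hroots : ∀ w : ℂ, P.IsRoot w → ‖w‖ ≤ k) :
    maxMod P k ≥
      (2 * k ^ n / (k ^ n + 1)) * maxMod P 1 +
        (2 * k ^ (n - 1) * ‖P.coeff (n - 1)‖ / (k ^ n + 1)) *
          ((k ^ n - 1) / (n : ℝ) - (k ^ (n - 2) - 1) / ((n : ℝ) - 2)) := by
  have hk0 : 0 < k := by linarith
  have hkc : (k : ℂ) ≠ 0 := by exact_mod_cast hk0.ne'
  have hle : ∀ z : ℂ, ‖z‖ = k → ‖P.eval z‖ ≤ maxMod P k := by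
    intro z hz
    have hb : BddAbove (Set.range fun z : sphere (0 : ℂ) k => ‖P.eval (z : ℂ)‖) := by
      have hc : Continuous fun z : ℂ => ‖P.eval z‖ := by fun_prop
      refine ((isCompact_sphere (0 : ℂ) k).image hc).bddAbove.mono ?_
      rintro _ ⟨z, rfl⟩
      exact ⟨z, z.2, rfl⟩
    exact le_ciSup hb ⟨z, by simpa using hz⟩
  set D := ((k ^ n - 1) / (n : ℝ) - (k ^ (n - 2) - 1) / ((n : ℝ) - 2)) with hD
  set H : ℂ[X] := (P.reflect n).comp (C (k : ℂ)⁻¹ * X) with hH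
  have hPr : (P.reflect n).natDegree ≤ n := natDegree_reflect_le.trans (by simp [hdeg])
  have hHd : H.natDegree ≤ n := by
    rw [natDegree_le_iff_coeff_eq_zero]
    intro N hN
    rw [hH, comp_C_mul_X_coeff, coeff_eq_zero_of_natDegree_lt (hPr.trans_lt hN), zero_mul]
  have hHe : ∀ z ≠ 0, H.eval z = ((k : ℂ)⁻¹ * z) ^ n * P.eval (k * z⁻¹) := by
    intro z hz
    rw [hH, eval_comp]
    simp only [eval_mul, eval_C, eval_X]
    rw [eval_reflect n P hdeg.le _ (mul_ne_zero (inv_ne_zero hkc) hz), mul_inv, inv_inv]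
  have hHc : ‖H.coeff 1‖ = ‖P.coeff (n - 1)‖ / k := by
    rw [hH, comp_C_mul_X_coeff, coeff_reflect, revAt_le (by omega), norm_mul, pow_one, norm_inv,
      Complex.norm_real, Real.norm_of_nonneg hk0.le, div_eq_mul_inv]
  have hH0 : H.eval 0 ≠ 0 := by
    rw [hH, eval_comp]
    simp only [eval_mul, eval_C, eval_X, mul_zero]
    rw [← coeff_zero_eq_eval_zero, coeff_reflect, revAt_le (by omega), Nat.sub_zero, ← hdeg]
    change P.leadingCoeff ≠ 0
    rw [leadingCoeff_ne_zero]
    rintro rfl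
    simp at hdeg; omega
  have hHr : ∀ z, H.eval z = 0 → 1 ≤ ‖z‖ := by
    intro z hz
    have hz0 : z ≠ 0 := by rintro rfl; exact hH0 hz
    rw [hHe z hz0] at hz
    rcases mul_eq_zero.1 hz with h | h
    · exact absurd h (pow_ne_zero _ (mul_ne_zero (inv_ne_zero hkc) hz0))
    · have := hroots _ h
      rw [norm_mul, norm_inv, Complex.norm_real, Real.norm_of_nonneg hk0.le,
        mul_le_iff_le_one_right hk0] at this
      exact (inv_le_one₀ (norm_pos_iff.2 hz0)).1 this
  have hHM : ∀ z : ℂ, ‖z‖ = 1 → ‖H.eval z‖ ≤ k⁻¹ ^ n * maxMod P k := by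
    intro z hz
    have hz0 : z ≠ 0 := by rintro rfl; simp at hz
    rw [hHe z hz0, norm_mul, norm_pow, norm_mul, hz, mul_one, norm_inv, Complex.norm_real,
      Real.norm_of_nonneg hk0.le]
    refine mul_le_mul_of_nonneg_left (hle _ ?_) (by positivity)
    simp [hz, abs_of_pos hk0]
  have hM1 : maxMod P 1 ≤ (k ^ n + 1) / 2 * (k⁻¹ ^ n * maxMod P k) - ‖P.coeff (n - 1)‖ / k * D := by
    have : Nonempty (sphere (0 : ℂ) 1) := ⟨⟨1, by simp⟩⟩
    refine ciSup_le ?_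
    rintro ⟨z, hz⟩
    have hz1 : ‖z‖ = 1 := by simpa using hz
    have hz0 : z ≠ 0 := by rintro rfl; simp at hz1
    have := growth n hn H hHd _ hHM hHr k hk z⁻¹ (by simp [hz1])
    rw [hHc, hHe _ (mul_ne_zero hkc (inv_ne_zero hz0)), ← mul_assoc, inv_mul_cancel₀ hkc, one_mul,
      mul_inv, inv_inv, ← mul_assoc, mul_inv_cancel₀ hkc, one_mul, norm_mul, norm_pow, norm_inv,
      hz1] at this
    simpa using this
  have hkn : 0 < k ^ n + 1 := by positivity
  have h1 := mul_le_mul_of_nonneg_left hM1 (by positivity : 0 ≤ 2 * k ^ n / (k ^ n + 1))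
  have e1 : k ^ n = k ^ (n - 1) * k := by rw [← pow_succ, Nat.sub_add_cancel (by omega)]
  have h2 : 2 * k ^ n / (k ^ n + 1) * ((k ^ n + 1) / 2 * (k⁻¹ ^ n * maxMod P k)
      - ‖P.coeff (n - 1)‖ / k * D) = maxMod P k -
      (2 * k ^ (n - 1) * ‖P.coeff (n - 1)‖ / (k ^ n + 1)) * D := by
    have e3 : 2 * k ^ n / (k ^ n + 1) * ((k ^ n + 1) / 2 * (k⁻¹ ^ n * maxMod P k)) = maxMod P k := by
      rw [inv_pow]; field_simp
    have e4 : 2 * k ^ n / (k ^ n + 1) * (‖P.coeff (n - 1)‖ / k * D) =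
        (2 * k ^ (n - 1) * ‖P.coeff (n - 1)‖ / (k ^ n + 1)) * D := by
      generalize k ^ n + 1 = E at *
      rw [e1]; field_simp
    rw [mul_sub, e3, e4]
  rw [h2] at h1
  linarith
end
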